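/- In dimension 3, the algebra A₃ of invariant 3-jet differential operators is A₃ = ℂ[f_i', w_{ij}, w_{ij}^k, W] for 1 ≤ i < j ≤ 3 and 1 ≤ k ≤ 3, where W = det of the 3×3 matrix with rows (f₁', f₂', f₃'), (f₁'', f₂'', f₃''), (f₁''', f₂''', f₃'''), w_{ij} = f_i'f_j'' − f_i''f_j', and w_{ij}^k = f_k'(f_i'f_j''' − f_i'''f_j') − 3f_k''(f_i'f_j'' − f_i''f_j'). Moreover the transcendence degree over ℂ of the field ℂ(f_i', w_{ij}, w_{ij}^k, W) equals 7. -/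

import Mathlib

/-!
Write `x_i, y_i, z_i` for the first, second and third derivatives of `f_i`, and let `B = genAlg` be
the algebra generated by `gens`. That `B` consists of invariants is a direct check
(`gens_subset_A3`).

*Localisation.* Where `x₁ ≠ 0` a unique reparametrization moves a jet to the slice `y₁ = z₁ = 0`,
and the coordinates of the resulting jet are values of generators divided by powers of `x₁`
(`slicePt`). An invariant `P` takes the same value at both jets, so `x₁ ^ N * P ∈ B` for some `N`.

*Saturation.* It remains to see that `x₁ * P ∈ B` implies `P ∈ B` (`mem_genAlg_of_X_mul_mem`).
Modulo `x₁ B` the algebra `B` is spanned by the products `mon v` of 14 normalised generators,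
indexed by the type `Gen`. The homomorphism `degen` sends `x₁, y₂, z₂` to `0`, `z₁` to `z₁ λ²` and
`z₃` to `z₃ λ`; it kills `x₁ * P`. The image of `mon v` is a polynomial in `λ` of degree `lamDeg v`
whose leading coefficient is the single monomial with exponent vector `multiExpo v`. Explicit
relations between the generators (`isToric_topCon`) show that two products with the same exponent
vector agree up to products of smaller `λ`-degree and elements of `x₁ B`; that the listed relations
generate the whole toric congruence is the combinatorial statement `Gen.IsToric.rel_of_multiExpo_eq`.
Distinct monomials being linearly independent, an element of `B` killed by `degen` can be rewritten
with smaller and smaller `λ`-degree until it lies in `x₁ B` (`mem_filt_of_degen_eq_zero`), and `x₁`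
can be cancelled.

*Transcendence degree.* The seven generators `x_i, w₁₂, w₁₃, w₁₂¹, w₁₃¹` take arbitrary values with
`x₁ ≠ 0`, hence are algebraically independent. Restriction to the slice `y₁ = z₁ = 0` is injective
on invariants, with values in a polynomial ring in seven variables, so no eight are independent.
-/

open MvPolynomial

noncomputable section

/-- The polynomial ring in the nine derivatives `f_i^{(j)}`, `1 ≤ i, j ≤ 3`, of a germ of curve
`f = (f₁, f₂, f₃) : (ℂ,0) → ℂ³`: the variable `(i, j)` stands for `f_{i+1}^{(j+1)}`. -/
abbrev JetRing3 := MvPolynomial (Fin 3 × Fin 3) ℂ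

/-- Reparametrization action on derivatives (`φ` tangent to the identity):
`f' ↦ f'`, `f'' ↦ f'' + 2b₂f'`, `f''' ↦ f''' + 6b₂f'' + 6b₃f'`. -/
def reparamVar (b₂ b₃ : ℂ) (v : Fin 3 × Fin 3) : JetRing3 :=
  if v.2 = 0 then X v
  else if v.2 = 1 then X (v.1, 1) + C (2 * b₂) * X (v.1, 0)
  else X (v.1, 2) + C (6 * b₂) * X (v.1, 1) + C (6 * b₃) * X (v.1, 0)

/-- The algebra `A₃` of invariant jet differentials of order 3 in dimension 3. -/
def A3 : Set JetRing3 :=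
  {Q | ∀ b₂ b₃ : ℂ, aeval (reparamVar b₂ b₃) Q = Q}

/-- The Wronskian `w_{ij} = f_i'f_j'' - f_i''f_j'`. -/
def wp (i j : Fin 3) : JetRing3 := X (i, 0) * X (j, 1) - X (i, 1) * X (j, 0)

/-- `w_{ij}^k = f_k'(f_i'f_j''' - f_i'''f_j') - 3f_k''(f_i'f_j'' - f_i''f_j')`. -/
def wt (i j k : Fin 3) : JetRing3 :=
  X (k, 0) * (X (i, 0) * X (j, 2) - X (i, 2) * X (j, 0)) - C 3 * X (k, 1) * wp i j

/-- The full Wronskian `W = det (f_i^{(j)})`. -/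
def Wr : JetRing3 :=
  X (0, 0) * (X (1, 1) * X (2, 2) - X (2, 1) * X (1, 2)) -
    X (1, 0) * (X (0, 1) * X (2, 2) - X (2, 1) * X (0, 2)) +
    X (2, 0) * (X (0, 1) * X (1, 2) - X (1, 1) * X (0, 2))

/-- The 16 generators `f_i'`, `w_{ij}`, `w_{ij}^k`, `W` (`1 ≤ i < j ≤ 3`, `1 ≤ k ≤ 3`). -/
def gens : Set JetRing3 :=
  (Set.range fun i : Fin 3 => X (i, 0)) ∪
    {P | ∃ i j : Fin 3, i < j ∧ P = wp i j} ∪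
    {P | ∃ i j k : Fin 3, i < j ∧ P = wt i j k} ∪ {Wr}

/-! ### Toric combinatorics of the leading monomials -/

/-- Labels of the 14 normalised generators. With `p` standing for `y₁`, the label `x a k` is the one
with leading monomial `p ^ a * x_{k+2}` (coming from `f_{k+2}'`, `w_{1,k+2}` or `w_{1,k+2}^1`), `s a`
has leading monomial `p ^ a * x₂ * y₃` (from `w₂₃` or `w₂₃^1`), `n k` stands for `w₂₃^{k+2}`, `w` for
the full Wronskian, and `z l` for one of `w₁₂^2`, `w₁₂^3`, `w₁₃^3`, where `l` counts the factors `x₃`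
of the leading monomial. The exact polynomials are given by `genPoly`. -/
inductive Gen : Type
  | x (a : Fin 3) (k : Fin 2)
  | s (a : Fin 2)
  | n (k : Fin 2)
  | w
  | z (l : Fin 3)

namespace Gen

/-- Exponents of `x₂, x₃, y₁, y₃, z₁, z₃`, in this order, in the leading monomial of a generator. -/
def expo : Gen → Fin 6 → ℕ
  | x a k => ![1 - k, k, a, 0, 0, 0]
  | s a => ![1, 0, a, 1, 0, 0]
  | n k => ![2 - k, k, 0, 0, 0, 1]
  | w => ![1, 0, 0, 1, 1, 0]
  | z l => ![2 - l, l, 0, 0, 1, 0]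

/-- Exponent vector of the leading monomial of a product of generators. -/
def multiExpo (v : Multiset Gen) : Fin 6 → ℕ := (v.map expo).sum

@[simp] lemma multiExpo_zero : multiExpo 0 = 0 := by simp [multiExpo]

@[simp] lemma multiExpo_cons (g : Gen) (v : Multiset Gen) :
    multiExpo (g ::ₘ v) = expo g + multiExpo v := by simp [multiExpo]

lemma multiExpo_add (u v : Multiset Gen) :
    multiExpo (u + v) = multiExpo u + multiExpo v := by simp [multiExpo]

/-- The factors `x₂` of the leading monomial of `v` that remain after pairing one with each `y₃` and
each `z₃`. The value is additive and nonnegative on each generator. -/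
def dI (v : Multiset Gen) : ℤ := multiExpo v 0 - multiExpo v 3 - multiExpo v 5

/-- The number of further factors `y₁` that the leading monomial of `v` could absorb: two for each
free factor `x₂` or `x₃`, one for each `y₃`, minus the number of factors `y₁` present. It is additive
and nonnegative on each generator. -/
def cap (v : Multiset Gen) : ℤ :=
  2 * (dI v + multiExpo v 1 - multiExpo v 5) + multiExpo v 3 - multiExpo v 2

lemma dI_cons (g : Gen) (v : Multiset Gen) :
    dI (g ::ₘ v) = ((expo g 0 : ℤ) - expo g 3 - expo g 5) + dI v := by
  simp [dI]; ring

lemma cap_cons (g : Gen) (v : Multiset Gen) :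
    cap (g ::ₘ v) = (2 * ((expo g 0 : ℤ) - expo g 3 - expo g 5 + expo g 1 - expo g 5)
      + expo g 3 - expo g 2) + cap v := by
  simp [cap, dI_cons]; ring

lemma expo_cons (g : Gen) (v : Multiset Gen) (t : Fin 6) :
    multiExpo (g ::ₘ v) t = expo g t + multiExpo v t := by simp

lemma dI_nonneg (v : Multiset Gen) : 0 ≤ dI v := by
  induction v using Multiset.induction with
  | empty => simp [dI]
  | cons g v ih =>
    rw [dI_cons]
    rcases g with ⟨a, k⟩ | a | k | _ | l
    · fin_cases k <;> simp [expo] <;> omega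
    · simp [expo]; omega
    · fin_cases k <;> simp [expo] <;> omega
    · simp [expo]; omega
    · fin_cases l <;> simp [expo] <;> omega

lemma cap_nonneg (v : Multiset Gen) : 0 ≤ cap v := by
  induction v using Multiset.induction with
  | empty => simp [cap, dI]
  | cons g v ih =>
    rw [cap_cons]
    rcases g with ⟨a, k⟩ | a | k | _ | l
    · fin_cases k <;> fin_cases a <;> simp [expo] <;> omega
    · fin_cases a <;> simp [expo] <;> omega
    · fin_cases k <;> simp [expo] <;> omega
    · simp [expo]; omega
    · fin_cases l <;> simp [expo] <;> omega

/-- If an additive function of a multiset of generators is positive, some member of the multiset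
contributes positively. -/
lemma pick (f : Multiset Gen → ℤ) (f₀ : Gen → ℤ) (hz : f 0 = 0)
    (hf : ∀ g v, f (g ::ₘ v) = f₀ g + f v) (v : Multiset Gen) (hv : 0 < f v) :
    ∃ g u, v = g ::ₘ u ∧ 0 < f₀ g := by
  induction v using Multiset.induction with
  | empty => omega
  | cons g v ih =>
    by_cases hg : 0 < f₀ g
    · exact ⟨g, v, rfl, hg⟩
    · obtain ⟨h, u, rfl, hh⟩ := ih (by have := hf g v; omega)
      exact ⟨h, g ::ₘ u, Multiset.cons_swap _ _ _, hh⟩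

lemma pick_expo (t : Fin 6) (v : Multiset Gen) (hv : 0 < multiExpo v t) :
    ∃ g u, v = g ::ₘ u ∧ 0 < expo g t := by
  obtain ⟨g, u, h, hg⟩ := pick (fun v => (multiExpo v t : ℤ)) (fun g => (expo g t : ℤ))
    (by simp) (by intro g v; simp) v (by simpa using hv)
  exact ⟨g, u, h, by simpa using hg⟩

lemma pick_s {v : Multiset Gen} (hv : 0 < multiExpo v 3) :
    (∃ u, v = w ::ₘ u) ∨ ∃ a u, v = s a ::ₘ u := by
  obtain ⟨g, u, rfl, hg⟩ := pick_expo 3 v hv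
  rcases g with ⟨a, k⟩ | a | k | _ | l
  · simp [expo] at hg
  · exact Or.inr ⟨a, u, rfl⟩
  · simp [expo] at hg
  · exact Or.inl ⟨u, rfl⟩
  · simp [expo] at hg

lemma pick_z {v : Multiset Gen} (hv : 0 < multiExpo v 4) :
    (∃ u, v = w ::ₘ u) ∨ ∃ l u, v = z l ::ₘ u := by
  obtain ⟨g, u, rfl, hg⟩ := pick_expo 4 v hv
  rcases g with ⟨a, k⟩ | a | k | _ | l
  · simp [expo] at hg
  · simp [expo] at hg
  · simp [expo] at hg
  · exact Or.inl ⟨u, rfl⟩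
  · exact Or.inr ⟨l, u, rfl⟩

lemma pick_n {v : Multiset Gen} (hv : 0 < multiExpo v 5) : ∃ k u, v = n k ::ₘ u := by
  obtain ⟨g, u, rfl, hg⟩ := pick_expo 5 v hv
  rcases g with ⟨a, k⟩ | a | k | _ | l
  · simp [expo] at hg
  · simp [expo] at hg
  · exact ⟨k, u, rfl⟩
  · simp [expo] at hg
  · simp [expo] at hg

lemma pick_I {v : Multiset Gen} (hv : 0 < dI v) :
    (∃ a u, v = x a 0 ::ₘ u) ∨ (∃ u, v = n 0 ::ₘ u) ∨ (∃ u, v = z 0 ::ₘ u) ∨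
      ∃ u, v = z 1 ::ₘ u := by
  obtain ⟨g, u, rfl, hg⟩ := pick dI _ (by simp [dI]) dI_cons v hv
  rcases g with ⟨a, k⟩ | a | k | _ | l
  · fin_cases k
    · exact Or.inl ⟨a, u, rfl⟩
    · simp [expo] at hg
  · simp [expo] at hg
  · fin_cases k
    · exact Or.inr (Or.inl ⟨u, rfl⟩)
    · simp [expo] at hg
  · simp [expo] at hg
  · fin_cases l
    · exact Or.inr (Or.inr (Or.inl ⟨u, rfl⟩))
    · exact Or.inr (Or.inr (Or.inr ⟨u, rfl⟩))
    · simp [expo] at hg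

/-- Only `x 0 k`, `x 1 k`, `s 0`, `w` and the `z l` have positive capacity, and the absence of `z₁`
excludes `w` and the `z l`. -/
lemma pick_cap {v : Multiset Gen} (h4 : multiExpo v 4 = 0) (hv : 0 < cap v) :
    (∃ k u, v = x 0 k ::ₘ u) ∨ (∃ k u, v = x 1 k ::ₘ u) ∨ ∃ u, v = s 0 ::ₘ u := by
  obtain ⟨g, u, rfl, hg⟩ := pick cap _ (by simp [cap, dI]) cap_cons v hv
  rcases g with ⟨a, k⟩ | a | k | _ | l
  · fin_cases a
    · exact Or.inl ⟨k, u, rfl⟩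
    · exact Or.inr (Or.inl ⟨k, u, rfl⟩)
    · fin_cases k <;> simp [expo] at hg
  · fin_cases a
    · exact Or.inr (Or.inr ⟨u, rfl⟩)
    · simp [expo] at hg
  · fin_cases k <;> simp [expo] at hg
  · simp [expo] at h4
  · simp [expo] at h4

/-- A congruence on products of generators that preserves leading monomials and identifies the
listed quadratic products with equal leading monomials. The field `zs` needs only that some product
divisible by `w` is equivalent to `z l * s a`; which one is then immaterial. -/
structure IsToric (r : AddCon (Multiset Gen)) : Prop where
  expo_eq : ∀ {u v}, r u v → multiExpo u = multiExpo v
  zs : ∀ l a, ∃ u, r {z l, s a} (w ::ₘ u)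
  sx0 : ∀ k, r {s 1, x 0 k} {s 0, x 1 k}
  sx1 : ∀ k, r {s 1, x 1 k} {s 0, x 2 k}
  nx : ∀ a, r {n 1, x a 0} {n 0, x a 1}
  nz0 : r {n 1, z 0} {n 0, z 1}
  nz1 : r {n 1, z 1} {n 0, z 2}
  xx : ∀ k l, r {x 1 k, x 1 l} {x 0 k, x 2 l}
  swap : ∀ a b, r {x a 1, x b 0} {x a 0, x b 1}
  zx1 : ∀ a, r {z 1, x a 0} {z 0, x a 1}
  zx2 : ∀ a, r {z 2, x a 0} {z 1, x a 1}
  zz : r {z 1, z 1} {z 0, z 2}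

namespace IsToric

variable {r : AddCon (Multiset Gen)}

lemma lift {g h : Gen} {p : Multiset Gen} (hr : r {g, h} p) (t : Multiset Gen) :
    r (g ::ₘ h ::ₘ t) (p + t) := by
  have := r.add hr (r.refl t)
  simpa using this

lemma lift2 {g h k l : Gen} (hr : r {g, h} {k, l}) (t : Multiset Gen) :
    r (g ::ₘ h ::ₘ t) (k ::ₘ l ::ₘ t) := by
  have := r.add hr (r.refl t)
  simpa using this

lemma comm_cons (g h : Gen) (t : Multiset Gen) : r (g ::ₘ h ::ₘ t) (h ::ₘ g ::ₘ t) := by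
  rw [Multiset.cons_swap]; exact r.refl _

lemma extract_w (H : IsToric r) {v : Multiset Gen} (h3 : 0 < multiExpo v 3)
    (h4 : 0 < multiExpo v 4) : ∃ u, r v (w ::ₘ u) := by
  obtain ⟨u, rfl⟩ | ⟨a, u, rfl⟩ := pick_s h3
  · exact ⟨u, r.refl _⟩
  · obtain ⟨t, rfl⟩ | ⟨l, t, rfl⟩ := pick_z (v := u) (by simpa [expo] using h4)
    · exact ⟨_, comm_cons _ _ _⟩
    · obtain ⟨p, hp⟩ := H.zs l a
      refine ⟨p + t, r.trans (comm_cons _ _ _) ?_⟩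
      simpa using lift hp t

lemma extract_s0 (H : IsToric r) {v : Multiset Gen} (h3 : 0 < multiExpo v 3)
    (h4 : multiExpo v 4 = 0) (hc : 0 < cap v) : ∃ u, r v (s 0 ::ₘ u) := by
  obtain ⟨u, rfl⟩ | ⟨a, u, rfl⟩ := pick_s h3
  · simp [expo] at h4
  · fin_cases a
    · exact ⟨u, r.refl _⟩
    · obtain ⟨k, t, rfl⟩ | ⟨k, t, rfl⟩ | ⟨t, rfl⟩ := pick_cap (v := u)
        (by simpa [expo] using h4) (by simpa [cap_cons, expo] using hc)
      · exact ⟨_, lift2 (H.sx0 k) t⟩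
      · exact ⟨_, lift2 (H.sx1 k) t⟩
      · exact ⟨_, comm_cons _ _ _⟩

lemma extract_s1 {v : Multiset Gen} (h3 : 0 < multiExpo v 3)
    (h4 : multiExpo v 4 = 0) (hc : cap v = 0) : ∃ u, r v (s 1 ::ₘ u) := by
  obtain ⟨u, rfl⟩ | ⟨a, u, rfl⟩ := pick_s h3
  · simp [expo] at h4
  · fin_cases a
    · have := cap_nonneg u
      simp [cap_cons, expo] at hc
      omega
    · exact ⟨u, r.refl _⟩

lemma extract_n0 (H : IsToric r) {v : Multiset Gen}
    (h5 : 0 < multiExpo v 5) (hI : 0 < dI v) : ∃ u, r v (n 0 ::ₘ u) := by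
  obtain ⟨k, u, rfl⟩ := pick_n h5
  fin_cases k
  · exact ⟨u, r.refl _⟩
  · obtain ⟨a, t, rfl⟩ | ⟨t, rfl⟩ | ⟨t, rfl⟩ | ⟨t, rfl⟩ := pick_I (v := u)
      (by simpa [dI_cons, expo] using hI)
    · exact ⟨_, lift2 (H.nx a) t⟩
    · exact ⟨_, comm_cons _ _ _⟩
    · exact ⟨_, lift2 H.nz0 t⟩
    · exact ⟨_, lift2 H.nz1 t⟩

lemma extract_n1 {v : Multiset Gen} (h5 : 0 < multiExpo v 5) (hI : dI v = 0) :
    ∃ u, r v (n 1 ::ₘ u) := by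
  obtain ⟨k, u, rfl⟩ := pick_n h5
  fin_cases k
  · have := dI_nonneg u
    simp [dI_cons, expo] at hI
    omega
  · exact ⟨u, r.refl _⟩

lemma z1_to_z0 (H : IsToric r) {u : Multiset Gen} (h5 : multiExpo u 5 = 0) (hI : 0 < dI u) :
    ∃ t, r (z 1 ::ₘ u) (z 0 ::ₘ t) := by
  obtain ⟨a, t, rfl⟩ | ⟨t, rfl⟩ | ⟨t, rfl⟩ | ⟨t, rfl⟩ := pick_I hI
  · exact ⟨_, lift2 (H.zx1 a) t⟩
  · simp [expo] at h5
  · exact ⟨_, comm_cons _ _ _⟩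
  · exact ⟨_, lift2 H.zz t⟩

lemma extract_z0 (H : IsToric r) {v : Multiset Gen} (h3 : multiExpo v 3 = 0)
    (h4 : 0 < multiExpo v 4) (h5 : multiExpo v 5 = 0) (hI : 2 ≤ dI v) :
    ∃ u, r v (z 0 ::ₘ u) := by
  obtain ⟨u, rfl⟩ | ⟨l, u, rfl⟩ := pick_z h4
  · simp [expo] at h3
  · fin_cases l
    · exact ⟨u, r.refl _⟩
    · simp [expo, dI_cons] at h5 hI
      exact z1_to_z0 H h5 (by omega)
    · simp [expo, dI_cons] at h5 hI
      obtain ⟨a, t, rfl⟩ | ⟨t, rfl⟩ | ⟨t, rfl⟩ | ⟨t, rfl⟩ := pick_I (v := u) (by omega)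
      · simp [expo, dI_cons] at h5 hI
        obtain ⟨q, hq⟩ := z1_to_z0 H (u := x a 1 ::ₘ t) (by simp [expo, h5])
          (by simp [dI_cons, expo]; omega)
        exact ⟨q, r.trans (lift2 (H.zx2 a) t) hq⟩
      · simp [expo] at h5
      · exact ⟨_, comm_cons _ _ _⟩
      · simp [expo, dI_cons] at h5 hI
        obtain ⟨q, hq⟩ := z1_to_z0 H (u := z 2 ::ₘ t) (by simp [expo, h5])
          (by simp [dI_cons, expo]; omega)
        exact ⟨q, r.trans (comm_cons _ _ _) hq⟩

lemma extract_z1 (H : IsToric r) {v : Multiset Gen} (h3 : multiExpo v 3 = 0)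
    (h4 : 0 < multiExpo v 4) (h5 : multiExpo v 5 = 0) (hI : dI v = 1) :
    ∃ u, r v (z 1 ::ₘ u) := by
  obtain ⟨u, rfl⟩ | ⟨l, u, rfl⟩ := pick_z h4
  · simp [expo] at h3
  · have hu := dI_nonneg u
    fin_cases l
    · simp [expo, dI_cons] at hI
      omega
    · exact ⟨u, r.refl _⟩
    · simp [expo, dI_cons] at h5 hI
      obtain ⟨a, t, rfl⟩ | ⟨t, rfl⟩ | ⟨t, rfl⟩ | ⟨t, rfl⟩ := pick_I (v := u) (by omega)
      · exact ⟨_, lift2 (H.zx2 a) t⟩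
      · simp [expo] at h5
      · have ht := dI_nonneg t
        simp [expo, dI_cons] at hI
        omega
      · exact ⟨_, comm_cons _ _ _⟩

lemma extract_z2 {v : Multiset Gen} (h3 : multiExpo v 3 = 0)
    (h4 : 0 < multiExpo v 4) (hI : dI v = 0) : ∃ u, r v (z 2 ::ₘ u) := by
  obtain ⟨u, rfl⟩ | ⟨l, u, rfl⟩ := pick_z h4
  · simp [expo] at h3
  · have hu := dI_nonneg u
    fin_cases l
    · simp [expo, dI_cons] at hI
      omega
    · simp [expo, dI_cons] at hI
      omega
    · exact ⟨u, r.refl _⟩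

/-- When only the generators `x b k` can occur, the value of `cap` dictates an index `a` such that
some factor `x a k` can be split off, with no control over `k`. -/
lemma extract_x_fst (H : IsToric r) {v : Multiset Gen} (h3 : multiExpo v 3 = 0)
    (h4 : multiExpo v 4 = 0) (h5 : multiExpo v 5 = 0) (hd : 0 < dI v + multiExpo v 1)
    (a : Fin 3) (ha : cap v = 2 - (a : ℕ) ∨ (a = 0 ∧ 2 ≤ cap v)) :
    ∃ k u, r v (x a k ::ₘ u) := by
  by_cases hc : cap v = 0
  · obtain rfl : a = 2 := by
      rcases ha with ha | ha
      · apply Fin.ext; simp; omega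
      · omega
    have : 0 < dI v ∨ 0 < multiExpo v 1 := by have := dI_nonneg v; omega
    obtain ⟨b, k, u, rfl⟩ : ∃ b k u, v = x b k ::ₘ u := by
      rcases this with h | h
      · obtain ⟨a, t, rfl⟩ | ⟨t, rfl⟩ | ⟨t, rfl⟩ | ⟨t, rfl⟩ := pick_I h
        · exact ⟨_, _, _, rfl⟩
        · simp [expo] at h5
        · simp [expo] at h4
        · simp [expo] at h4
      · obtain ⟨g, u, rfl, hg⟩ := pick_expo 1 v h
        rcases g with ⟨a, k⟩ | a | k | _ | l
        · exact ⟨_, _, _, rfl⟩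
        · simp [expo] at h3
        · simp [expo] at h5
        · simp [expo] at h3
        · simp [expo] at h4
    have hu := cap_nonneg u
    refine ⟨k, u, ?_⟩
    obtain rfl : b = 2 := by
      fin_cases b
      · fin_cases k <;> simp [expo, cap_cons] at hc <;> omega
      · fin_cases k <;> simp [expo, cap_cons] at hc <;> omega
      · rfl
    exact r.refl _
  · have hv := cap_nonneg v
    obtain ⟨k, u, rfl⟩ | ⟨k, u, rfl⟩ | ⟨u, rfl⟩ := pick_cap h4 (by omega)
    · have hu := cap_nonneg u
      have hk : cap (x 0 k ::ₘ u) = 2 + cap u := by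
        fin_cases k <;> simp [cap_cons, expo]
      obtain rfl : a = 0 := by
        rcases ha with ha | ha
        · apply Fin.ext; simp; omega
        · exact ha.1
      exact ⟨k, u, r.refl _⟩
    · have hu := cap_nonneg u
      have hk : cap (x 1 k ::ₘ u) = 1 + cap u := by
        fin_cases k <;> simp [cap_cons, expo]
      by_cases h1 : cap u = 0
      · obtain rfl : a = 1 := by
          rcases ha with ha | ha
          · apply Fin.ext; simp; omega
          · omega
        exact ⟨k, u, r.refl _⟩
      · obtain rfl : a = 0 := by
          rcases ha with ha | ha
          · apply Fin.ext; simp; omega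
          · exact ha.1
        obtain ⟨l, t, rfl⟩ | ⟨l, t, rfl⟩ | ⟨t, rfl⟩ := pick_cap (v := u)
          (by simpa [expo] using h4) (by omega)
        · exact ⟨_, _, comm_cons _ _ _⟩
        · exact ⟨_, _, lift2 (H.xx k l) t⟩
        · simp [expo] at h3
    · simp [expo] at h3

lemma extract_x (H : IsToric r) {v : Multiset Gen} (h3 : multiExpo v 3 = 0)
    (h4 : multiExpo v 4 = 0) (h5 : multiExpo v 5 = 0) (hd : 0 < dI v + multiExpo v 1)
    (a : Fin 3) (ha : cap v = 2 - (a : ℕ) ∨ (a = 0 ∧ 2 ≤ cap v))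
    (k : Fin 2) (hk : if k = 0 then 0 < dI v else dI v = 0) :
    ∃ u, r v (x a k ::ₘ u) := by
  obtain ⟨l, u, hu⟩ := extract_x_fst H h3 h4 h5 hd a ha
  have he := H.expo_eq hu
  have hI : dI v = dI (x a l ::ₘ u) := by simp only [dI, he]
  have hu0 := dI_nonneg u
  rw [he] at h4 h5
  rw [hI] at hk
  fin_cases k <;> fin_cases l
  · exact ⟨u, hu⟩
  · simp [dI_cons, expo] at hk h4 h5
    obtain ⟨b, t, rfl⟩ | ⟨t, rfl⟩ | ⟨t, rfl⟩ | ⟨t, rfl⟩ := pick_I hk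
    · exact ⟨_, r.trans hu (lift2 (H.swap a b) t)⟩
    · simp [expo] at h5
    · simp [expo] at h4
    · simp [expo] at h4
  · simp [dI_cons, expo] at hk
    omega
  · exact ⟨u, hu⟩

/-- The leading monomial alone determines a generator that can be split off, up to the congruence,
from every product having that leading monomial. -/
lemma exists_common (H : IsToric r) {v v' : Multiset Gen} (hv : multiExpo v ≠ 0)
    (h : multiExpo v = multiExpo v') : ∃ g u u', r v (g ::ₘ u) ∧ r v' (g ::ₘ u') := by
  suffices ∃ g, ∀ q, multiExpo v = multiExpo q → ∃ u, r q (g ::ₘ u) by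
    obtain ⟨g, hg⟩ := this
    obtain ⟨u, hu⟩ := hg v rfl
    obtain ⟨u', hu'⟩ := hg v' h
    exact ⟨g, u, u', hu, hu'⟩
  have hdI : ∀ q, multiExpo v = multiExpo q → dI q = dI v := fun q hq => by simp only [dI, hq]
  have hcap : ∀ q, multiExpo v = multiExpo q → cap q = cap v := fun q hq => by
    simp only [cap, dI, hq]
  have hI0 := dI_nonneg v
  have hc0 := cap_nonneg v
  by_cases h3 : 0 < multiExpo v 3
  · by_cases h4 : 0 < multiExpo v 4
    · exact ⟨w, fun q hq => extract_w H (hq ▸ h3) (hq ▸ h4)⟩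
    · by_cases hc : 0 < cap v
      · exact ⟨s 0, fun q hq => extract_s0 H (hq ▸ h3) (by rw [← hq]; omega)
          (by rw [hcap q hq]; omega)⟩
      · exact ⟨s 1, fun q hq => extract_s1 (hq ▸ h3) (by rw [← hq]; omega)
          (by rw [hcap q hq]; omega)⟩
  by_cases h5 : 0 < multiExpo v 5
  · by_cases hI : 0 < dI v
    · exact ⟨n 0, fun q hq => extract_n0 H (hq ▸ h5) (by rw [hdI q hq]; omega)⟩
    · exact ⟨n 1, fun q hq => extract_n1 (hq ▸ h5) (by rw [hdI q hq]; omega)⟩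
  by_cases h4 : 0 < multiExpo v 4
  · by_cases hI : 2 ≤ dI v
    · exact ⟨z 0, fun q hq => extract_z0 H (by rw [← hq]; omega) (hq ▸ h4)
        (by rw [← hq]; omega) (by rw [hdI q hq]; omega)⟩
    by_cases hI : dI v = 1
    · exact ⟨z 1, fun q hq => extract_z1 H (by rw [← hq]; omega) (hq ▸ h4)
        (by rw [← hq]; omega) (by rw [hdI q hq]; omega)⟩
    · exact ⟨z 2, fun q hq => extract_z2 (by rw [← hq]; omega) (hq ▸ h4)
        (by rw [hdI q hq]; omega)⟩
  have hd : 0 < dI v + multiExpo v 1 := by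
    by_contra hd
    apply hv
    unfold cap at hc0
    unfold dI at *
    funext t
    fin_cases t <;> simp <;> omega
  obtain ⟨k, hk⟩ : ∃ k : Fin 2, if k = 0 then 0 < dI v else dI v = 0 := by
    by_cases hI : 0 < dI v
    · exact ⟨0, by simpa using hI⟩
    · exact ⟨1, by simp; omega⟩
  obtain ⟨a, ha⟩ : ∃ a : Fin 3, cap v = 2 - (a : ℕ) ∨ (a = 0 ∧ 2 ≤ cap v) := by
    by_cases h2 : 2 ≤ cap v
    · exact ⟨0, Or.inr ⟨rfl, h2⟩⟩
    by_cases h1 : cap v = 1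
    · exact ⟨1, Or.inl (by simp [h1])⟩
    · exact ⟨2, Or.inl (by simp; omega)⟩
  refine ⟨x a k, fun q hq => extract_x H (by rw [← hq]; omega) (by rw [← hq]; omega)
    (by rw [← hq]; omega) ?_ a ?_ k ?_⟩
  · rw [hdI q hq, ← hq]; exact hd
  · rw [hcap q hq]; exact ha
  · rw [hdI q hq]; exact hk

lemma expo_ne_zero (g : Gen) : 0 < ∑ t, expo g t := by
  rcases g with ⟨a, k⟩ | a | k | _ | l
  · fin_cases k <;> simp [expo, Fin.sum_univ_succ]
  · simp [expo, Fin.sum_univ_succ]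
  · fin_cases k <;> simp [expo, Fin.sum_univ_succ]
  · simp [expo, Fin.sum_univ_succ]
  · fin_cases l <;> simp [expo, Fin.sum_univ_succ]

lemma eq_zero_of_multiExpo {v : Multiset Gen} (h : multiExpo v = 0) : v = 0 := by
  induction v using Multiset.induction with
  | empty => rfl
  | cons g v _ =>
    exfalso
    have h1 := expo_ne_zero g
    have h2 : ∑ t, multiExpo (g ::ₘ v) t = 0 := by simp only [h]; simp
    simp only [multiExpo_cons, Pi.add_apply, Finset.sum_add_distrib] at h2
    omega

/-- The listed relations generate the full toric congruence: products with the same leading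
monomial are equivalent. The proof splits off a common generator and inducts on the total degree. -/
theorem rel_of_multiExpo_eq (H : IsToric r) (v v' : Multiset Gen)
    (h : multiExpo v = multiExpo v') : r v v' := by
  induction hn : ∑ t, multiExpo v t using Nat.strong_induction_on generalizing v v' with
  | _ N ih =>
    by_cases hv : multiExpo v = 0
    · rw [eq_zero_of_multiExpo hv, eq_zero_of_multiExpo (h ▸ hv : multiExpo v' = 0)]
      exact r.refl _
    · obtain ⟨g, u, u', hu, hu'⟩ := exists_common H hv h
      have e1 := H.expo_eq hu
      have e2 := H.expo_eq hu'
      have hg := expo_ne_zero g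
      have huu : multiExpo u = multiExpo u' := by
        rw [e1, e2] at h
        simpa using h
      have := ih (∑ t, multiExpo u t) (by
        rw [← hn, e1]
        simp only [multiExpo_cons, Pi.add_apply, Finset.sum_add_distrib]
        omega) u u' huu rfl
      refine r.trans hu (r.trans ?_ (r.symm hu'))
      simpa using r.add (r.refl {g}) this

end IsToric

end Gen

/-! ### Normalised generators and the filtration -/

/-- The generators, normalised so that their leading monomials have coefficient `1`. Up to
scalars these are all of `gens` except `f₁'` and `w₁₃^2`, the latter being `w₂₃^1 + w₁₂^3`. -/
def genPoly : Gen → JetRing3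
  | .x a k => ![![X (1, 0), X (2, 0)], ![-wp 0 1, -wp 0 2],
      ![C (1 / 3) * wt 0 1 0, C (1 / 3) * wt 0 2 0]] a k
  | .s a => ![wp 1 2, -(C (1 / 3) * wt 1 2 0)] a
  | .n k => ![wt 1 2 1, wt 1 2 2] k
  | .w => Wr
  | .z l => ![-wt 0 1 1, -wt 0 1 2, -wt 0 2 2] l

/-- The product of a multiset of normalised generators. -/
def mon (v : Multiset Gen) : JetRing3 := (v.map genPoly).prod

@[simp] lemma mon_zero : mon 0 = 1 := by simp [mon]

@[simp] lemma mon_cons (g : Gen) (v : Multiset Gen) : mon (g ::ₘ v) = genPoly g * mon v := by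
  simp [mon]

@[simp] lemma mon_singleton (g : Gen) : mon {g} = genPoly g := by simp [mon]

lemma mon_add (u v : Multiset Gen) : mon (u + v) = mon u * mon v := by simp [mon]

/-- The algebra `ℂ[f_i', w_{ij}, w_{ij}^k, W]`. -/
abbrev genAlg : Subalgebra ℂ JetRing3 := Algebra.adjoin ℂ gens

lemma X_mem (i : Fin 3) : (X (i, 0) : JetRing3) ∈ genAlg :=
  Algebra.subset_adjoin (Or.inl (Or.inl (Or.inl ⟨i, rfl⟩)))

lemma wp_mem {i j : Fin 3} (h : i < j) : wp i j ∈ genAlg :=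
  Algebra.subset_adjoin (Or.inl (Or.inl (Or.inr ⟨i, j, h, rfl⟩)))

lemma wt_mem {i j : Fin 3} (k : Fin 3) (h : i < j) : wt i j k ∈ genAlg :=
  Algebra.subset_adjoin (Or.inl (Or.inr ⟨i, j, k, h, rfl⟩))

lemma Wr_mem : Wr ∈ genAlg := Algebra.subset_adjoin (Or.inr rfl)

lemma C_mul_mem (c : ℂ) {P : JetRing3} (h : P ∈ genAlg) : C c * P ∈ genAlg := by
  rw [← MvPolynomial.smul_eq_C_mul]
  exact Subalgebra.smul_mem _ h c

lemma genPoly_mem (g : Gen) : genPoly g ∈ genAlg := by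
  rcases g with ⟨a, k⟩ | a | k | _ | l
  · fin_cases a <;> fin_cases k
    · exact X_mem 1
    · exact X_mem 2
    · exact neg_mem (wp_mem (by decide))
    · exact neg_mem (wp_mem (by decide))
    · exact C_mul_mem _ (wt_mem 0 (by decide))
    · exact C_mul_mem _ (wt_mem 0 (by decide))
  · fin_cases a
    · exact wp_mem (by decide)
    · exact neg_mem (C_mul_mem _ (wt_mem 0 (by decide)))
  · fin_cases k <;> exact wt_mem _ (by decide)
  · exact Wr_mem
  · fin_cases l <;> exact neg_mem (wt_mem _ (by decide))

lemma mon_mem (v : Multiset Gen) : mon v ∈ genAlg := by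
  induction v using Multiset.induction with
  | empty => simp
  | cons g v ih => rw [mon_cons]; exact mul_mem (genPoly_mem g) ih

/-- The degree in `λ` of the degeneration of `mon v`, where `z₁` has weight 2 and `z₃` weight 1. -/
def lamDeg (v : Multiset Gen) : ℕ := 2 * Gen.multiExpo v 4 + Gen.multiExpo v 5

lemma lamDeg_add (u v : Multiset Gen) : lamDeg (u + v) = lamDeg u + lamDeg v := by
  simp [lamDeg, Gen.multiExpo_add]; ring

/-- The multiples of `f₁'` by elements of `genAlg`. -/
def xAlg : Submodule ℂ JetRing3 :=
  (Subalgebra.toSubmodule genAlg).map (LinearMap.mulLeft ℂ (X (0, 0) : JetRing3))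

lemma mem_xAlg {P : JetRing3} : P ∈ xAlg ↔ ∃ b ∈ genAlg, X (0, 0) * b = P := by
  simp [xAlg]

/-- The span of the products of generators with `λ`-degree less than `m`, together with the multiples
of `f₁'`; in particular `filt 0 = xAlg`. -/
def filt (m : ℕ) : Submodule ℂ JetRing3 :=
  Submodule.span ℂ {P | ∃ u, lamDeg u < m ∧ P = mon u} ⊔ xAlg

lemma mon_mem_filt {u : Multiset Gen} {m : ℕ} (h : lamDeg u < m) : mon u ∈ filt m :=
  Submodule.mem_sup_left (Submodule.subset_span ⟨u, h, rfl⟩)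

lemma X_mul_mem_filt {b : JetRing3} (m : ℕ) (h : b ∈ genAlg) : X (0, 0) * b ∈ filt m :=
  Submodule.mem_sup_right (mem_xAlg.2 ⟨b, h, rfl⟩)

lemma C_mul_mem_filt (c : ℂ) {P : JetRing3} {m : ℕ} (h : P ∈ filt m) : C c * P ∈ filt m := by
  rw [← MvPolynomial.smul_eq_C_mul]
  exact Submodule.smul_mem _ c h

lemma mon_mul_mem_filt {m m' : ℕ} (u : Multiset Gen) (hm : m + lamDeg u ≤ m') {P : JetRing3}
    (hP : P ∈ filt m) : mon u * P ∈ filt m' := by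
  have : filt m ≤ (filt m').comap (LinearMap.mulLeft ℂ (mon u)) := by
    refine sup_le (Submodule.span_le.2 ?_) ?_
    · rintro _ ⟨v, hv, rfl⟩
      simp only [Submodule.comap_coe, Set.mem_preimage, LinearMap.mulLeft_apply, SetLike.mem_coe]
      rw [← mon_add]
      exact mon_mem_filt (by rw [lamDeg_add]; omega)
    · intro Q hQ
      obtain ⟨b, hb, rfl⟩ := mem_xAlg.1 hQ
      simp only [Submodule.mem_comap, LinearMap.mulLeft_apply]
      rw [mul_left_comm]
      exact X_mul_mem_filt _ (mul_mem (mon_mem u) hb)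
  exact this hP

/-- Products with the same leading monomial that agree modulo smaller `λ`-degree and multiples of
`f₁'`. Being compatible with products, this is a congruence. -/
def topCon : AddCon (Multiset Gen) where
  r u v := Gen.multiExpo u = Gen.multiExpo v ∧ mon u - mon v ∈ filt (lamDeg u)
  iseqv :=
    { refl := fun u => ⟨rfl, by simp⟩
      symm := fun {u v} h => ⟨h.1.symm, by
        have : lamDeg v = lamDeg u := by simp only [lamDeg, h.1]
        rw [this, ← neg_sub]
        exact neg_mem h.2⟩
      trans := fun {u v t} h h' => ⟨h.1.trans h'.1, by
        have : lamDeg v = lamDeg u := by simp only [lamDeg, h.1]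
        rw [← sub_add_sub_cancel (mon u) (mon v)]
        exact add_mem h.2 (this ▸ h'.2)⟩ }
  add' := fun {u u' v v'} h h' => ⟨by rw [Gen.multiExpo_add, Gen.multiExpo_add, h.1, h'.1], by
    have : lamDeg u' = lamDeg u := by simp only [lamDeg, h.1]
    have e : mon (u + v) - mon (u' + v') =
        mon v * (mon u - mon u') + mon u' * (mon v - mon v') := by
      simp only [mon_add]; ring
    rw [e]
    refine add_mem (mon_mul_mem_filt v (lamDeg_add u v).ge h.2) (mon_mul_mem_filt u' ?_ h'.2)
    rw [lamDeg_add]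
    omega⟩

/-- Certificate form of `topCon`: the difference is an explicit combination `lo` of products with
smaller `λ`-degree plus `f₁' ^ (k + 1)` times an explicit combination `hi`. -/
lemma topCon_of_eq (u v : Multiset Gen) (lo : List (ℂ × Multiset Gen))
    (hi : List (ℂ × Multiset Gen)) (k : ℕ)
    (he : Gen.multiExpo u = Gen.multiExpo v)
    (hlo : ∀ t ∈ lo, lamDeg t.2 < lamDeg u)
    (h : mon u - mon v = (lo.map fun t => C t.1 * mon t.2).sum +
      X (0, 0) * (X (0, 0) ^ k * (hi.map fun t => C t.1 * mon t.2).sum)) : topCon u v := by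
  refine ⟨he, ?_⟩
  rw [h]
  refine add_mem ?_ (X_mul_mem_filt _ (mul_mem (pow_mem (X_mem 0) k) ?_))
  · refine list_sum_mem ?_
    simp only [List.mem_map]
    rintro _ ⟨t, ht, rfl⟩
    exact C_mul_mem_filt _ (mon_mem_filt (hlo t ht))
  · refine list_sum_mem ?_
    simp only [List.mem_map]
    rintro _ ⟨t, _, rfl⟩
    exact C_mul_mem _ (mon_mem _)

/-! ### The relations between the generators -/

set_option linter.unusedSimpArgs false in
open Gen in
/-- The quadratic relations among the normalised generators, each an explicit polynomial identity. -/
lemma isToric_topCon : Gen.IsToric topCon where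
  expo_eq h := h.1
  zs l a := by
    fin_cases l <;> fin_cases a
    on_goal 1 =>
      refine ⟨{x 0 0, x 0 0}, topCon_of_eq _ _ [(1, {x 1 0, n 0})] [] 0 (by decide) (by decide) ?_⟩
    on_goal 2 =>
      refine ⟨{x 1 0, x 0 0}, topCon_of_eq _ _ [(1, {x 2 0, n 0})] [] 0 (by decide) (by decide) ?_⟩
    on_goal 3 =>
      refine ⟨{x 0 0, x 0 1}, topCon_of_eq _ _ [(1, {x 1 0, n 1})] [] 0 (by decide) (by decide) ?_⟩
    on_goal 4 =>
      refine ⟨{x 1 0, x 0 1}, topCon_of_eq _ _ [(-3, {s 1, s 1}), (1, {x 2 1, n 0})] [] 0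
        (by decide) (by decide) ?_⟩
    on_goal 5 =>
      refine ⟨{x 0 1, x 0 1}, topCon_of_eq _ _ [(1, {x 1 1, n 1})] [] 0 (by decide) (by decide) ?_⟩
    on_goal 6 =>
      refine ⟨{x 1 1, x 0 1}, topCon_of_eq _ _ [(1, {x 2 1, n 1})] [] 0 (by decide) (by decide) ?_⟩
    all_goals exact MvPolynomial.funext fun p => by simp [genPoly, wp, wt, Wr]; ring
  sx0 k := by
    fin_cases k
    on_goal 1 =>
      refine topCon_of_eq _ _ [] [(-1/3, {n 0})] 0 (by decide) (by decide) ?_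
    on_goal 2 =>
      refine topCon_of_eq _ _ [] [(-1/3, {n 1})] 0 (by decide) (by decide) ?_
    all_goals exact MvPolynomial.funext fun p => by simp [genPoly, wp, wt, Wr]; ring
  sx1 k := by
    fin_cases k
    on_goal 1 =>
      refine topCon_of_eq _ _ [] [(1/3, {x 0 0, w})] 0 (by decide) (by decide) ?_
    on_goal 2 =>
      refine topCon_of_eq _ _ [] [(1/3, {x 0 1, w})] 0 (by decide) (by decide) ?_
    all_goals exact MvPolynomial.funext fun p => by simp [genPoly, wp, wt, Wr]; ring
  nx a := by
    fin_cases a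
    on_goal 1 =>
      refine topCon_of_eq _ _ [(-3, {s 0, s 0})] [] 0 (by decide) (by decide) ?_
    on_goal 2 =>
      refine topCon_of_eq _ _ [(-3, {s 0, s 1})] [] 0 (by decide) (by decide) ?_
    on_goal 3 =>
      refine topCon_of_eq _ _ [(-3, {s 1, s 1})] [(1, {s 0, w})] 0 (by decide) (by decide) ?_
    all_goals exact MvPolynomial.funext fun p => by simp [genPoly, wp, wt, Wr]; ring
  nz0 := by
    refine topCon_of_eq _ _ [(-3, {x 0 0, s 0, w})] [] 0 (by decide) (by decide) ?_
    exact MvPolynomial.funext fun p => by simp [genPoly, wp, wt, Wr]; ring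
  nz1 := by
    refine topCon_of_eq _ _ [(-3, {s 1, n 1}), (-3, {x 0 1, s 0, w})] [] 0
      (by decide) (by decide) ?_
    exact MvPolynomial.funext fun p => by simp [genPoly, wp, wt, Wr]; ring
  xx k l := by
    fin_cases k <;> fin_cases l
    on_goal 1 =>
      refine topCon_of_eq _ _ [] [(1/3, {z 0})] 0 (by decide) (by decide) ?_
    on_goal 2 =>
      refine topCon_of_eq _ _ [] [(1, {s 1}), (1/3, {z 1})] 0 (by decide) (by decide) ?_
    on_goal 3 =>
      refine topCon_of_eq _ _ [] [(1/3, {z 1})] 0 (by decide) (by decide) ?_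
    on_goal 4 =>
      refine topCon_of_eq _ _ [] [(1/3, {z 2})] 0 (by decide) (by decide) ?_
    all_goals exact MvPolynomial.funext fun p => by simp [genPoly, wp, wt, Wr]; ring
  swap a b := by
    fin_cases a <;> fin_cases b
    on_goal 1 =>
      refine topCon_of_eq _ _ [] [] 0 (by decide) (by decide) ?_
    on_goal 2 =>
      refine topCon_of_eq _ _ [] [(1, {s 0})] 0 (by decide) (by decide) ?_
    on_goal 3 =>
      refine topCon_of_eq _ _ [] [(1, {s 1})] 0 (by decide) (by decide) ?_
    on_goal 4 =>
      refine topCon_of_eq _ _ [] [(-1, {s 0})] 0 (by decide) (by decide) ?_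
    on_goal 5 =>
      refine topCon_of_eq _ _ [] [] 0 (by decide) (by decide) ?_
    on_goal 6 =>
      refine topCon_of_eq _ _ [] [(1/3, {w})] 1 (by decide) (by decide) ?_
    on_goal 7 =>
      refine topCon_of_eq _ _ [] [(-1, {s 1})] 0 (by decide) (by decide) ?_
    on_goal 8 =>
      refine topCon_of_eq _ _ [] [(-1/3, {w})] 1 (by decide) (by decide) ?_
    on_goal 9 =>
      refine topCon_of_eq _ _ [] [] 0 (by decide) (by decide) ?_
    all_goals exact MvPolynomial.funext fun p => by simp [genPoly, wp, wt, Wr]; ring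
  zx1 a := by
    fin_cases a
    on_goal 1 =>
      refine topCon_of_eq _ _ [(-3, {x 1 0, s 0})] [] 0 (by decide) (by decide) ?_
    on_goal 2 =>
      refine topCon_of_eq _ _ [(-3, {x 2 0, s 0})] [] 0 (by decide) (by decide) ?_
    on_goal 3 =>
      refine topCon_of_eq _ _ [(-3, {x 2 0, s 1})] [(1, {x 1 0, w})] 0 (by decide) (by decide) ?_
    all_goals exact MvPolynomial.funext fun p => by simp [genPoly, wp, wt, Wr]; ring
  zx2 a := by
    fin_cases a
    on_goal 1 =>
      refine topCon_of_eq _ _ [(3, {x 0 1, s 1}), (-3, {x 1 1, s 0})] [] 0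
        (by decide) (by decide) ?_
    on_goal 2 =>
      refine topCon_of_eq _ _ [(-3, {x 2 1, s 0}), (3, {x 1 1, s 1})] [] 0
        (by decide) (by decide) ?_
    on_goal 3 =>
      refine topCon_of_eq _ _ [] [(1, {x 1 1, w})] 0 (by decide) (by decide) ?_
    all_goals exact MvPolynomial.funext fun p => by simp [genPoly, wp, wt, Wr]; ring
  zz := by
    refine topCon_of_eq _ _
      [(-3, {x 2 0, n 1}), (-3, {s 1, z 1}), (-9, {s 1, s 1}), (3, {x 2 1, n 0})] [] 0
      (by decide) (by decide) ?_
    exact MvPolynomial.funext fun p => by simp [genPoly, wp, wt, Wr]; ring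

/-! ### The degeneration -/

/-- Polynomials in `x₂, x₃, y₁, y₃, z₁, z₃`, the variables surviving in the degeneration. -/
abbrev LeadRing := MvPolynomial (Fin 6) ℂ

open Polynomial in
/-- Images of the nine derivatives: `x₁, y₂, z₂ ↦ 0`, `z₁ ↦ z₁ λ²`, `z₃ ↦ z₃ λ`, the others fixed;
the polynomial variable is `λ`. -/
def degenVar (v : Fin 3 × Fin 3) : LeadRing[X] :=
  ![![0, Polynomial.C (MvPolynomial.X 2), Polynomial.C (MvPolynomial.X 4) * Polynomial.X ^ 2],
    ![Polynomial.C (MvPolynomial.X 0), 0, 0],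
    ![Polynomial.C (MvPolynomial.X 1), Polynomial.C (MvPolynomial.X 3),
      Polynomial.C (MvPolynomial.X 5) * Polynomial.X]] v.1 v.2

open Polynomial in
/-- The degeneration homomorphism, which kills `f₁'`. -/
def degen : JetRing3 →ₐ[ℂ] LeadRing[X] := aeval degenVar

/-- An exponent vector as a finitely supported function. -/
def expoFinsupp (e : Fin 6 → ℕ) : Fin 6 →₀ ℕ := Finsupp.equivFunOnFinite.symm e

lemma monomial_expoFinsupp (e : Fin 6 → ℕ) :
    monomial (expoFinsupp e) (1 : ℂ) = ∏ t, (X t : LeadRing) ^ e t := by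
  rw [MvPolynomial.monomial_eq]
  simp [expoFinsupp, Finsupp.prod_fintype]

open Polynomial in
/-- The part of the degeneration of a generator below its top degree in `λ`. -/
def lowPart : Gen → LeadRing[X]
  | .n k => ![0, Polynomial.C (-3 * X 0 * X 3 ^ 2)] k
  | .w => Polynomial.C (-X 0 * X 2 * X 5) * Polynomial.X
  | .z l => ![0, Polynomial.C (-3 * X 0 * X 2 * X 3), Polynomial.C (-3 * X 1 * X 2 * X 3)] l
  | _ => 0

lemma degen_genPoly (g : Gen) : degen (genPoly g) =
    Polynomial.C (monomial (expoFinsupp g.expo) 1) * Polynomial.X ^ (2 * g.expo 4 + g.expo 5)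
      + lowPart g := by
  have h3 : degen (C 3) = 3 := by
    rw [map_ofNat MvPolynomial.C 3, map_ofNat]
  obtain ⟨c, hc⟩ : ∃ c, degen (C (1 / 3)) = c := ⟨_, rfl⟩
  have h13 : c * 3 = 1 := by
    rw [← hc, ← h3, ← map_mul, ← map_mul]; norm_num
  have hX : ∀ v, degen (X v) = degenVar v := fun v => by simp [degen]
  have e3 : (Polynomial.C (3 : LeadRing)) = 3 := map_ofNat _ 3
  rw [monomial_expoFinsupp]
  rcases g with ⟨a, k⟩ | a | k | _ | l
  · fin_cases a <;> fin_cases k <;>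
      simp [-one_div, genPoly, wp, wt, hX, hc, degenVar, Gen.expo, lowPart, Fin.prod_univ_succ, h3]
    · ring
    · ring
    · linear_combination (Polynomial.C (X 2) ^ 2 * Polynomial.C (X 0)) * h13
    · linear_combination (Polynomial.C (X 2) ^ 2 * Polynomial.C (X 1)) * h13
  · fin_cases a <;>
      simp [-one_div, genPoly, wp, wt, hX, hc, degenVar, Gen.expo, lowPart, Fin.prod_univ_succ, h3]
    linear_combination (Polynomial.C (X 0) * Polynomial.C (X 2) * Polynomial.C (X 3)) * h13
  · fin_cases k <;>
      simp [-one_div, genPoly, wp, wt, hX, degenVar, Gen.expo, lowPart, Fin.prod_univ_succ, h3, e3]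
      <;> ring
  · simp [genPoly, Wr, hX, degenVar, Gen.expo, lowPart, Fin.prod_univ_succ]
    ring
  · fin_cases l <;>
      simp [genPoly, wp, wt, hX, degenVar, Gen.expo, lowPart, Fin.prod_univ_succ, h3, e3]
      <;> ring

lemma degen_genPoly_natDegree (g : Gen) :
    (degen (genPoly g)).natDegree ≤ 2 * g.expo 4 + g.expo 5 ∧
    (degen (genPoly g)).coeff (2 * g.expo 4 + g.expo 5) = monomial (expoFinsupp g.expo) 1 := by
  have hlow : (lowPart g).degree < (2 * g.expo 4 + g.expo 5 : ℕ) ∨ lowPart g = 0 := by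
    rcases g with ⟨a, k⟩ | a | k | _ | l
    · simp [lowPart]
    · simp [lowPart]
    · fin_cases k
      · simp [lowPart]
      · left
        simp only [lowPart]
        refine lt_of_le_of_lt Polynomial.degree_C_le ?_
        simp [Gen.expo]
    · left
      refine lt_of_le_of_lt (Polynomial.degree_C_mul_X_le _) ?_
      simp [Gen.expo]
    · fin_cases l
      · simp [lowPart]
      · left
        refine lt_of_le_of_lt Polynomial.degree_C_le ?_
        simp [Gen.expo]
      · left
        refine lt_of_le_of_lt Polynomial.degree_C_le ?_
        simp [Gen.expo]
  have hlow' : (lowPart g).degree < (2 * g.expo 4 + g.expo 5 : ℕ) := by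
    rcases hlow with h | h
    · exact h
    · rw [h, Polynomial.degree_zero]; exact WithBot.bot_lt_coe _
  rw [degen_genPoly]
  constructor
  · refine Polynomial.natDegree_add_le_of_degree_le (Polynomial.natDegree_C_mul_X_pow_le _ _) ?_
    exact Polynomial.natDegree_le_of_degree_le hlow'.le
  · rw [Polynomial.coeff_add, Polynomial.coeff_C_mul_X_pow, if_pos rfl,
      Polynomial.coeff_eq_zero_of_degree_lt hlow', add_zero]

lemma degen_mon (v : Multiset Gen) : (degen (mon v)).natDegree ≤ lamDeg v ∧
    (degen (mon v)).coeff (lamDeg v) = monomial (expoFinsupp (Gen.multiExpo v)) 1 := by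
  induction v using Multiset.induction with
  | empty =>
    have : expoFinsupp 0 = 0 := by ext; simp [expoFinsupp]
    simp [lamDeg, this]
  | cons g v ih =>
    have hg := degen_genPoly_natDegree g
    have hl : lamDeg (g ::ₘ v) = (2 * g.expo 4 + g.expo 5) + lamDeg v := by
      simp [lamDeg]; ring
    have he : expoFinsupp (Gen.multiExpo (g ::ₘ v)) =
        expoFinsupp g.expo + expoFinsupp (Gen.multiExpo v) := by
      ext; simp [expoFinsupp]
    rw [mon_cons, map_mul, hl]
    refine ⟨Polynomial.natDegree_mul_le_of_le hg.1 ih.1, ?_⟩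
    rw [Polynomial.coeff_mul_add_eq_of_natDegree_le hg.1 ih.1, hg.2, ih.2, he,
      MvPolynomial.monomial_mul, one_mul]

lemma degen_X_mul (P : JetRing3) : degen (X (0, 0) * P) = 0 := by
  simp [degen, degenVar]

/-! ### Divisibility by `f₁'` inside the algebra of generators -/

/-- The descent step: if the degeneration vanishes, the terms of top `λ`-degree cancel modulo lower
ones, because the coefficients sum to zero over each set of products sharing a leading monomial. -/
lemma mem_filt_of_degen_eq_zero {m : ℕ} {P : JetRing3} (hP : P ∈ filt (m + 1))
    (h0 : degen P = 0) : P ∈ filt m := by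
  obtain ⟨Q, hQ, R, hR, rfl⟩ := Submodule.mem_sup.1 hP
  have hRd : degen R = 0 := by
    obtain ⟨b, -, rfl⟩ := mem_xAlg.1 hR
    exact degen_X_mul b
  refine add_mem ?_ (Submodule.mem_sup_right hR)
  have hQd : degen Q = 0 := by simpa [hRd] using h0
  have hset : {P | ∃ u, lamDeg u < m + 1 ∧ P = mon u} = mon '' {u | lamDeg u < m + 1} := by
    ext P; simp [eq_comm]
  rw [hset, Finsupp.mem_span_image_iff_linearCombination] at hQ
  obtain ⟨c, hc, rfl⟩ := hQ
  set c₁ := c.filter (fun u => lamDeg u = m) with hc₁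
  set c₂ := c.filter (fun u => ¬ lamDeg u = m) with hc₂
  have hsplit : c = c₁ + c₂ := (Finsupp.filter_add_filter_not c _).symm
  have hs₁ : ∀ u ∈ c₁.support, lamDeg u = m := fun u hu => by
    rw [hc₁, Finsupp.support_filter, Finset.mem_filter] at hu
    exact hu.2
  have hs₂ : ∀ u ∈ c₂.support, lamDeg u < m := fun u hu => by
    rw [hc₂, Finsupp.support_filter, Finset.mem_filter] at hu
    have : lamDeg u < m + 1 := hc hu.1
    omega
  let lead : (Fin 6 → ℕ) → LeadRing := fun e => monomial (expoFinsupp e) 1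
  have hlead : LinearIndependent ℂ lead := by
    have := (MvPolynomial.basisMonomials (Fin 6) ℂ).linearIndependent.comp expoFinsupp
      Finsupp.equivFunOnFinite.symm.injective
    simpa [Function.comp_def] using this
  -- comparing coefficients of `λ ^ m` kills the sum of `c₁` over each fibre of `multiExpo`
  have htop : c₁.mapDomain Gen.multiExpo = 0 := by
    refine linearIndependent_iff.1 hlead _ ?_
    rw [Finsupp.linearCombination_mapDomain]
    have h1 : (degen (Finsupp.linearCombination ℂ mon c)).coeff m = 0 := by
      rw [hQd, Polynomial.coeff_zero]
    rw [hsplit, map_add, map_add, Polynomial.coeff_add, Finsupp.linearCombination_apply,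
      Finsupp.linearCombination_apply, Finsupp.sum, Finsupp.sum, map_sum, map_sum,
      Polynomial.finsetSum_coeff, Polynomial.finsetSum_coeff] at h1
    rw [Finset.sum_eq_zero (s := c₂.support), add_zero] at h1
    · rw [Finsupp.linearCombination_apply, Finsupp.sum, ← h1]
      refine Finset.sum_congr rfl fun u hu => ?_
      rw [map_smul, Polynomial.coeff_smul, ← hs₁ u hu, (degen_mon u).2]
      rfl
    · intro u hu
      rw [map_smul, Polynomial.coeff_smul,
        Polynomial.coeff_eq_zero_of_natDegree_lt ((degen_mon u).1.trans_lt (hs₂ u hu)), smul_zero]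
  let rep : (Fin 6 → ℕ) → Multiset Gen := Function.invFun Gen.multiExpo
  have hrep : ∀ u, Gen.multiExpo (rep (Gen.multiExpo u)) = Gen.multiExpo u := fun u =>
    Function.invFun_eq ⟨u, rfl⟩
  have hrep0 : Finsupp.linearCombination ℂ ((mon ∘ rep) ∘ Gen.multiExpo) c₁ = 0 := by
    rw [← Finsupp.linearCombination_mapDomain, htop, map_zero]
  rw [hsplit, map_add]
  refine add_mem ?_ ?_
  · rw [← sub_zero (Finsupp.linearCombination ℂ mon c₁), ← hrep0,
      Finsupp.linearCombination_apply, Finsupp.linearCombination_apply, Finsupp.sum, Finsupp.sum,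
      ← Finset.sum_sub_distrib]
    refine sum_mem fun u hu => ?_
    rw [← smul_sub]
    have := isToric_topCon.rel_of_multiExpo_eq u (rep (Gen.multiExpo u)) (hrep u).symm
    exact Submodule.smul_mem _ _ (hs₁ u hu ▸ this.2)
  · rw [Finsupp.linearCombination_apply, Finsupp.sum]
    exact sum_mem fun u hu => Submodule.smul_mem _ _ (mon_mem_filt (hs₂ u hu))

lemma mem_xAlg_of_mem_filt {m : ℕ} {P : JetRing3} (hP : P ∈ filt m) (h0 : degen P = 0) :
    P ∈ xAlg := by
  induction m with
  | zero => simpa [filt] using hP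
  | succ m ih => exact ih (mem_filt_of_degen_eq_zero hP h0)

lemma filt_mono {m m' : ℕ} (h : m ≤ m') : filt m ≤ filt m' :=
  sup_le_sup_right (Submodule.span_mono (by
    rintro _ ⟨u, hu, rfl⟩
    exact ⟨u, hu.trans_le h, rfl⟩)) _

lemma filt_le_genAlg (m : ℕ) : filt m ≤ Subalgebra.toSubmodule genAlg := by
  refine sup_le (Submodule.span_le.2 ?_) ?_
  · rintro _ ⟨u, -, rfl⟩
    exact mon_mem u
  · intro Q hQ
    obtain ⟨b, hb, rfl⟩ := mem_xAlg.1 hQ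
    exact Subalgebra.mul_mem _ (X_mem 0) hb

lemma mul_mem_filt {m m' : ℕ} {P Q : JetRing3} (hP : P ∈ filt m) (hQ : Q ∈ filt m') :
    P * Q ∈ filt (m + m') := by
  have : filt m ≤ (filt (m + m')).comap (LinearMap.mulRight ℂ Q) := by
    refine sup_le (Submodule.span_le.2 ?_) ?_
    · rintro _ ⟨v, hv, rfl⟩
      exact mon_mul_mem_filt v (by omega) hQ
    · intro R hR
      obtain ⟨b, hb, rfl⟩ := mem_xAlg.1 hR
      simp only [Submodule.mem_comap, LinearMap.mulRight_apply]
      rw [mul_assoc]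
      exact X_mul_mem_filt _ (mul_mem hb (filt_le_genAlg _ hQ))
  exact this hP

lemma genPoly_mem_filt (g : Gen) : ∃ m, genPoly g ∈ filt m :=
  ⟨lamDeg {g} + 1, by rw [← mon_singleton]; exact mon_mem_filt (Nat.lt_succ_self _)⟩

/-- The filtration exhausts `genAlg`. -/
lemma exists_mem_filt {P : JetRing3} (hP : P ∈ genAlg) : ∃ m, P ∈ filt m := by
  have hC : ∀ (c : ℂ) (Q : JetRing3), (∃ m, Q ∈ filt m) → ∃ m, C c * Q ∈ filt m :=
    fun c Q ⟨m, h⟩ => ⟨m, C_mul_mem_filt c h⟩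
  have hadd : ∀ (Q R : JetRing3), (∃ m, Q ∈ filt m) → (∃ m, R ∈ filt m) →
      ∃ m, Q + R ∈ filt m := fun Q R ⟨m, h⟩ ⟨m', h'⟩ =>
    ⟨max m m', add_mem (filt_mono (le_max_left _ _) h) (filt_mono (le_max_right _ _) h')⟩
  have hC' : ∀ (c : ℂ) (g : Gen) (Q : JetRing3), Q = C c * genPoly g → ∃ m, Q ∈ filt m :=
    fun c g Q hQ => hQ ▸ hC c _ (genPoly_mem_filt g)
  have h3 : ∀ Q : JetRing3, Q = C 3 * (C (1 / 3) * Q) := fun Q => by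
    rw [← mul_assoc, ← C_mul]; norm_num
  have h120 : ∃ m, wt 1 2 0 ∈ filt m := hC' (-3) (.s 1) _ (by
    conv_lhs => rw [h3 (wt 1 2 0)]
    simp [genPoly])
  have h012 : ∃ m, wt 0 1 2 ∈ filt m := hC' (-1) (.z 1) _ (by simp [genPoly])
  induction hP using Algebra.adjoin_induction with
  | mem P hP =>
    rcases hP with ((⟨i, rfl⟩ | ⟨i, j, hij, rfl⟩) | ⟨i, j, k, hij, rfl⟩) | rfl
    · fin_cases i
      · exact ⟨0, by simpa using X_mul_mem_filt 0 (one_mem genAlg)⟩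
      · exact genPoly_mem_filt (.x 0 0)
      · exact genPoly_mem_filt (.x 0 1)
    · fin_cases i <;> fin_cases j <;> first | exact absurd hij (by decide) | skip
      · exact hC' (-1) (.x 1 0) _ (by simp [genPoly])
      · exact hC' (-1) (.x 1 1) _ (by simp [genPoly])
      · exact genPoly_mem_filt (.s 0)
    · fin_cases i <;> fin_cases j <;> first | exact absurd hij (by decide) | skip
      · fin_cases k
        · exact hC' 3 (.x 2 0) _ (h3 _)
        · exact hC' (-1) (.z 0) _ (by simp [genPoly])
        · exact h012
      · fin_cases k
        · exact hC' 3 (.x 2 1) _ (h3 _)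
        · -- the cyclic relation expresses `w₁₃²` through two other generators
          have : wt 0 2 1 = wt 1 2 0 + wt 0 1 2 := by simp only [wt, wp]; ring
          exact this ▸ hadd _ _ h120 h012
        · exact hC' (-1) (.z 2) _ (by simp [genPoly])
      · fin_cases k
        · exact h120
        · exact genPoly_mem_filt (.n 0)
        · exact genPoly_mem_filt (.n 1)
    · exact genPoly_mem_filt .w
  | algebraMap c =>
    refine ⟨1, ?_⟩
    have := C_mul_mem_filt c (mon_mem_filt (u := 0) (m := 1) (by simp [lamDeg]))
    simpa using this
  | add P Q _ _ hP hQ => exact hadd _ _ hP hQ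
  | mul P Q _ _ hP hQ =>
    obtain ⟨m, hm⟩ := hP
    obtain ⟨k, hk⟩ := hQ
    exact ⟨m + k, mul_mem_filt hm hk⟩

/-- The algebra `genAlg` is saturated with respect to `f₁'`. -/
theorem mem_genAlg_of_X_mul_mem {P : JetRing3} (h : X (0, 0) * P ∈ genAlg) : P ∈ genAlg := by
  obtain ⟨m, hm⟩ := exists_mem_filt h
  obtain ⟨b, hb, hbP⟩ := mem_xAlg.1 (mem_xAlg_of_mem_filt hm (degen_X_mul P))
  rwa [← mul_left_cancel₀ (X_ne_zero _) hbP]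

lemma mem_genAlg_of_X_pow_mul_mem {N : ℕ} {P : JetRing3} (h : X (0, 0) ^ N * P ∈ genAlg) :
    P ∈ genAlg := by
  induction N with
  | zero => simpa using h
  | succ N ih =>
    refine ih (mem_genAlg_of_X_mul_mem ?_)
    rw [← mul_assoc, ← pow_succ']
    exact h

/-! ### Invariants and the slice where the second and third derivatives of `f₁` vanish -/

lemma eval_aeval {σ τ : Type*} (p : τ → ℂ) (g : σ → MvPolynomial τ ℂ) (P : MvPolynomial σ ℂ) :
    eval p (aeval g P) = eval (fun v => eval p (g v)) P := by
  induction P using MvPolynomial.induction_on with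
  | C c => simp
  | add P Q hP hQ => rw [map_add, map_add, map_add, hP, hQ]
  | mul_X P v hP => rw [map_mul, map_mul, map_mul, hP, aeval_X, eval_X]

/-- The jet obtained from `p` by the reparametrization that makes the second and third derivatives
of `f₁` vanish; it is meaningful only when `f₁' ≠ 0` at `p`. Its entries are values of generators
divided by powers of `f₁'`. -/
def slicePt (p : Fin 3 × Fin 3 → ℂ) (v : Fin 3 × Fin 3) : ℂ :=
  ![p (v.1, 0), eval p (wp 0 v.1) / p (0, 0), eval p (wt 0 v.1 0) / p (0, 0) ^ 2] v.2

lemma eval_slicePt {P : JetRing3} (hP : P ∈ A3) {p : Fin 3 × Fin 3 → ℂ} (hp : p (0, 0) ≠ 0) :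
    eval (slicePt p) P = eval p P := by
  -- the 3-jet of the reparametrization is read off from `f₁''` and `f₁'''` at `p`
  have h := hP (-(p (0, 1) / p (0, 0)) / 2)
    ((3 * p (0, 1) ^ 2 / p (0, 0) ^ 2 - p (0, 2) / p (0, 0)) / 6)
  rw [← congrArg (eval p) h, eval_aeval]
  congr 2
  funext ⟨i, j⟩
  fin_cases j <;> simp [slicePt, reparamVar, wp, wt] <;> field_simp <;> ring

lemma gens_subset_A3 {P : JetRing3} (hP : P ∈ genAlg) : P ∈ A3 := by
  intro b₂ b₃
  induction hP using Algebra.adjoin_induction with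
  | mem P hP =>
    rcases hP with ((⟨i, rfl⟩ | ⟨i, j, hij, rfl⟩) | ⟨i, j, k, hij, rfl⟩) | rfl
    · simp [reparamVar]
    · simp [wp, reparamVar]; ring
    · have h3 : (C 3 : JetRing3) = 3 := map_ofNat _ 3
      have h2 : (C 2 : JetRing3) = 2 := map_ofNat _ 2
      have h6 : (C 6 : JetRing3) = 6 := map_ofNat _ 6
      simp [wt, wp, reparamVar, h3, h2, h6, map_ofNat]; ring
    · simp [Wr, reparamVar]; ring
  | algebraMap c => simp
  | add P Q _ _ hP hQ => rw [map_add, hP, hQ]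
  | mul P Q _ _ hP hQ => rw [map_mul, hP, hQ]

/-- Every polynomial restricted to the slice becomes, after clearing a power of `f₁'`, an element
of `genAlg`. -/
lemma exists_eval_slicePt (P : JetRing3) : ∃ N, ∃ F ∈ genAlg, ∀ p : Fin 3 × Fin 3 → ℂ,
    p (0, 0) ≠ 0 → eval p F = p (0, 0) ^ N * eval (slicePt p) P := by
  induction P using MvPolynomial.induction_on with
  | C c => exact ⟨0, C c, Subalgebra.algebraMap_mem _ c, by simp⟩
  | add P Q hP hQ =>
    obtain ⟨N, F, hF, h⟩ := hP
    obtain ⟨N', F', hF', h'⟩ := hQ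
    refine ⟨N + N', X (0, 0) ^ N' * F + X (0, 0) ^ N * F',
      add_mem (mul_mem (pow_mem (X_mem 0) _) hF) (mul_mem (pow_mem (X_mem 0) _) hF'),
      fun p hp => ?_⟩
    simp [h p hp, h' p hp]
    ring
  | mul_X P v hP =>
    obtain ⟨N, F, hF, h⟩ := hP
    obtain ⟨M, G, hG, h'⟩ : ∃ M, ∃ G ∈ genAlg, ∀ p : Fin 3 × Fin 3 → ℂ,
        p (0, 0) ≠ 0 → eval p G = p (0, 0) ^ M * slicePt p v := by
      obtain ⟨i, j⟩ := v
      have hwp : wp 0 i ∈ genAlg := by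
        by_cases hi : i = 0
        · simp [hi, wp, mul_comm]
        · exact wp_mem (Fin.pos_of_ne_zero hi)
      have hwt : wt 0 i 0 ∈ genAlg := by
        by_cases hi : i = 0
        · have : wt 0 0 0 = 0 := by simp only [wt, wp]; ring
          simp [hi, this]
        · exact wt_mem _ (Fin.pos_of_ne_zero hi)
      fin_cases j
      · exact ⟨0, _, X_mem i, fun p hp => by simp [slicePt]⟩
      · exact ⟨1, _, hwp, fun p hp => by simp [slicePt]; field_simp⟩
      · exact ⟨2, _, hwt, fun p hp => by simp [slicePt]; field_simp⟩
    refine ⟨N + M, F * G, mul_mem hF hG, fun p hp => ?_⟩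
    simp [h p hp, h' p hp]
    ring

theorem A3_subset {P : JetRing3} (hP : P ∈ A3) : P ∈ genAlg := by
  obtain ⟨N, F, hF, h⟩ := exists_eval_slicePt P
  have hE : X (0, 0) * F = X (0, 0) * (X (0, 0) ^ N * P) := by
    refine MvPolynomial.funext fun p => ?_
    by_cases hp : p (0, 0) = 0
    · simp [hp]
    · simp [h p hp, eval_slicePt hP hp]
  refine mem_genAlg_of_X_pow_mul_mem (N := N) ?_
  rwa [← mul_left_cancel₀ (X_ne_zero _) hE]

/-! ### Transcendence degree -/

lemma exists_indep : ∃ g : Fin 7 → JetRing3, (∀ i, g i ∈ gens) ∧ AlgebraicIndependent ℂ g := by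
  refine ⟨![X (0, 0), X (1, 0), X (2, 0), wp 0 1, wp 0 2, wt 0 1 0, wt 0 2 0], ?_, ?_⟩
  · intro i
    fin_cases i
    · exact Or.inl (Or.inl (Or.inl ⟨0, rfl⟩))
    · exact Or.inl (Or.inl (Or.inl ⟨1, rfl⟩))
    · exact Or.inl (Or.inl (Or.inl ⟨2, rfl⟩))
    · exact Or.inl (Or.inl (Or.inr ⟨0, 1, by decide, rfl⟩))
    · exact Or.inl (Or.inl (Or.inr ⟨0, 2, by decide, rfl⟩))
    · exact Or.inl (Or.inr ⟨0, 1, 0, by decide, rfl⟩)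
    · exact Or.inl (Or.inr ⟨0, 2, 0, by decide, rfl⟩)
  · rw [algebraicIndependent_iff]
    intro F hF
    -- the seven generators take arbitrary values `t` with `t 0 ≠ 0`, so `F` vanishes wherever
    -- `t 0 ≠ 0`
    have hE : X 0 * F = 0 := by
      refine MvPolynomial.funext fun t => ?_
      by_cases ht : t 0 = 0
      · simp [ht]
      · have h := congrArg (eval fun v : Fin 3 × Fin 3 =>
          (![![t 0, 0, 0], ![t 1, t 3 / t 0, t 5 / t 0 ^ 2],
            ![t 2, t 4 / t 0, t 6 / t 0 ^ 2]] v.1 v.2 : ℂ)) hF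
        rw [eval_aeval, map_zero] at h
        rw [map_mul, map_zero]
        convert mul_zero _ using 2
        rw [← h]
        congr 2
        funext i
        fin_cases i <;> simp [wp, wt] <;> field_simp
    exact (mul_eq_zero.1 hE).resolve_left (X_ne_zero _)

/-- Restriction to the slice where the second and third derivatives of `f₁` vanish. -/
def sliceHom : JetRing3 →ₐ[ℂ] MvPolynomial (Fin 7) ℂ :=
  aeval fun v => ![![X 0, 0, 0], ![X 1, X 3, X 5], ![X 2, X 4, X 6]] v.1 v.2

/-- Invariants are determined by their restriction to the slice. -/
lemma eq_zero_of_sliceHom {P : JetRing3} (hP : P ∈ A3) (h : sliceHom P = 0) : P = 0 := by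
  have hE : X (0, 0) * P = 0 := by
    refine MvPolynomial.funext fun p => ?_
    by_cases hp : p (0, 0) = 0
    · simp [hp]
    · have h' := congrArg (eval ![slicePt p (0, 0), slicePt p (1, 0), slicePt p (2, 0),
        slicePt p (1, 1), slicePt p (2, 1), slicePt p (1, 2), slicePt p (2, 2)]) h
      rw [sliceHom, eval_aeval, map_zero] at h'
      rw [map_mul, map_zero, ← eval_slicePt hP hp]
      convert mul_zero _ using 2
      rw [← h']
      congr 2
      funext ⟨i, j⟩
      fin_cases i <;> fin_cases j <;> simp [slicePt, wp, wt] <;> exact Or.inl (by ring)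
  exact (mul_eq_zero.1 hE).resolve_left (X_ne_zero _)

lemma not_indep (g : Fin 8 → JetRing3) (hg : ∀ i, g i ∈ gens) : ¬ AlgebraicIndependent ℂ g := by
  intro h
  have h' : AlgebraicIndependent ℂ (fun i => sliceHom (g i)) := by
    rw [algebraicIndependent_iff] at h ⊢
    intro F hF
    refine h F (eq_zero_of_sliceHom (gens_subset_A3 ?_) ?_)
    · have : Algebra.adjoin ℂ (Set.range g) ≤ genAlg :=
        Algebra.adjoin_mono (Set.range_subset_iff.2 hg)
      refine this ?_
      rw [Algebra.adjoin_range_eq_range_aeval]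
      exact ⟨F, rfl⟩
    · rw [← hF, ← AlgHom.comp_apply, comp_aeval]
  have := h'.lift_cardinalMk_le_trdeg
  rw [MvPolynomial.trdeg_of_isDomain] at this
  norm_num at this

/-- **Invariant 3-jet differentials in dimension 3 (Rousseau):**
`A₃ = ℂ[f_i', w_{ij}, w_{ij}^k, W]`, and the field generated by these elements has
transcendence degree 7 over `ℂ` (there are 7 algebraically independent elements among the
generators, and no 8). -/
theorem invariant_3jets_dim3 :
    A3 = (Algebra.adjoin ℂ gens : Subalgebra ℂ JetRing3) ∧
    (∃ g : Fin 7 → JetRing3, (∀ i, g i ∈ gens) ∧ AlgebraicIndependent ℂ g) ∧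
    (∀ g : Fin 8 → JetRing3, (∀ i, g i ∈ gens) → ¬ AlgebraicIndependent ℂ g) :=
  ⟨Set.ext fun _ => ⟨A3_subset, gens_subset_A3⟩, exists_indep, not_indep⟩
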